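/- Let μ ≠ 0 be a nilpotent Lie algebra law on ℝ^n such that every derivation of (ℝ^n, μ) is a nilpotent linear map (i.e., (ℝ^n, μ) is characteristically nilpotent, equivalently of rank zero). Then μ is not an Einstein nilradical. -/

import Mathlib

open Matrix BigOperators Polynomial

noncomputable section

abbrev Law (n : ℕ) := (Fin n → ℝ) → (Fin n → ℝ) → (Fin n → ℝ)

/-- `i`-th canonical basis vector of `ℝ^n`. -/
def bVec {n : ℕ} (i : Fin n) : Fin n → ℝ := Pi.single i 1

def IsBilin {n : ℕ} (μ : Law n) : Prop :=
  (∀ X, IsLinearMap ℝ (μ X)) ∧ (∀ Y, IsLinearMap ℝ (fun X => μ X Y))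

def IsSkew {n : ℕ} (μ : Law n) : Prop := ∀ X Y, μ X Y = - μ Y X

def IsJacobi {n : ℕ} (μ : Law n) : Prop :=
  ∀ X Y Z, μ (μ X Y) Z + μ (μ Y Z) X + μ (μ Z X) Y = 0

def IsLieLaw {n : ℕ} (μ : Law n) : Prop := IsBilin μ ∧ IsSkew μ ∧ IsJacobi μ

/-- lower central series of the law `μ`. -/
def lcs {n : ℕ} (μ : Law n) : ℕ → Submodule ℝ (Fin n → ℝ)
  | 0 => ⊤
  | k + 1 => Submodule.span ℝ {z | ∃ x y, y ∈ lcs μ k ∧ z = μ x y}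

def IsNilpotentLaw {n : ℕ} (μ : Law n) : Prop :=
  IsLieLaw μ ∧ ∃ k, lcs μ k = ⊥

/-- the action of `GL_n(ℝ)` on laws: `(g·μ)(X,Y) = g μ(g⁻¹X, g⁻¹Y)`. -/
def act {n : ℕ} (g : GL (Fin n) ℝ) (μ : Law n) : Law n :=
  fun X Y =>
    (g : Matrix (Fin n) (Fin n) ℝ).mulVec
      (μ (((g⁻¹ : GL (Fin n) ℝ) : Matrix (Fin n) (Fin n) ℝ).mulVec X)
         (((g⁻¹ : GL (Fin n) ℝ) : Matrix (Fin n) (Fin n) ℝ).mulVec Y))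

def IsDerivation {n : ℕ} (μ : Law n) (ψ : Matrix (Fin n) (Fin n) ℝ) : Prop :=
  ∀ X Y, ψ.mulVec (μ X Y) = μ (ψ.mulVec X) Y + μ X (ψ.mulVec Y)

/-- the unnormalized moment map `m(μ) = 4 Ric_μ`, as a matrix in the canonical basis. -/
def momentMap {n : ℕ} (μ : Law n) : Matrix (Fin n) (Fin n) ℝ :=
  Matrix.of fun k l =>
    4 * (-(1/2) * ∑ i, ∑ j, μ (bVec k) (bVec i) j * μ (bVec l) (bVec i) j
      + (1/4) * ∑ i, ∑ j, μ (bVec i) (bVec j) k * μ (bVec i) (bVec j) l)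

def IsEinsteinNilradical {n : ℕ} (μ : Law n) : Prop :=
  ∃ g : GL (Fin n) ℝ, ∃ c : ℝ, ∃ φ : Matrix (Fin n) (Fin n) ℝ,
    c < 0 ∧ φ.IsSymm ∧ IsDerivation (act g μ) φ ∧
    momentMap (act g μ) = c • (1 : Matrix (Fin n) (Fin n) ℝ) + φ

/-- build a (bilinear) law from a table `c` of structure constants on the
canonical basis, antisymmetrized: `[e_i, e_j] = c i j - c j i`. -/
def mkLaw {n : ℕ} (c : Fin n → Fin n → Fin n → ℝ) : Law n :=
  fun X Y k => ∑ i, ∑ j, X i * Y j * (c i j k - c j i k)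

theorem symm_nilp_zero {n : ℕ} (φ : Matrix (Fin n) (Fin n) ℝ) (hs : φ.IsSymm)
    (hn : IsNilpotent φ) : φ = 0 := by
  obtain ⟨m, hm⟩ := hn
  have key : ∀ k : ℕ, φ ^ (2 ^ k) = 0 → φ = 0 := by
    intro k
    induction k with
    | zero => intro h; simpa using h
    | succ k ih =>
      intro h
      apply ih
      have h2 : (φ ^ (2 ^ k))ᴴ * φ ^ (2 ^ k) = 0 := by
        rw [Matrix.conjTranspose_eq_transpose_of_trivial, Matrix.transpose_pow, hs.eq, ← pow_add,
          ← two_mul, ← pow_succ', h]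
      exact Matrix.conjTranspose_mul_self_eq_zero.mp h2
  exact key m (pow_eq_zero_of_le (Nat.lt_two_pow_self).le hm)

theorem exists_center {n : ℕ} (μ : Law n) (hμ : IsNilpotentLaw μ) (hne : μ ≠ 0) :
    ∃ z : Fin n → ℝ, z ≠ 0 ∧ ∀ x, μ z x = 0 := by
  obtain ⟨⟨hb, hsk, -⟩, hk⟩ := hμ
  classical
  have hmin := Nat.find_spec hk
  have hlt := fun m => @Nat.find_min _ _ hk m
  generalize Nat.find hk = k at hmin hlt
  cases k with
  | zero =>
    exfalso
    apply hne
    funext x y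
    have : μ x y ∈ lcs μ 0 := by simp [lcs]
    rw [hmin] at this
    simpa using this
  | succ k =>
    obtain ⟨z, hz, hz0⟩ := (Submodule.ne_bot_iff _).mp (hlt k (Nat.lt_succ_self k))
    refine ⟨z, hz0, fun x => ?_⟩
    have : μ x z ∈ lcs μ (k + 1) := Submodule.subset_span ⟨x, z, hz, rfl⟩
    rw [hmin, Submodule.mem_bot] at this
    rw [hsk, this, neg_zero]

theorem moment_nonneg {n : ℕ} (ν : Law n) (z : Fin n → ℝ)
    (hz : ∀ i j, ∑ k, z k * ν (bVec k) (bVec i) j = 0) :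
    0 ≤ z ⬝ᵥ (momentMap ν *ᵥ z) := by
  have e : z ⬝ᵥ (momentMap ν *ᵥ z) =
      -2 * ∑ i, ∑ j, (∑ k, z k * ν (bVec k) (bVec i) j) ^ 2
      + ∑ i, ∑ j, (∑ k, z k * ν (bVec i) (bVec j) k) ^ 2 := by
    have sw : ∀ F : Fin n → Fin n → Fin n → ℝ,
        ∑ i, ∑ j, (∑ k, z k * F i j k) ^ 2
          = ∑ k, ∑ l, z k * z l * ∑ i, ∑ j, F i j k * F i j l := by
      intro F
      simp only [sq, Finset.sum_mul_sum]
      simp only [Finset.mul_sum]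
      have h := Finset.sum_comm (s := (Finset.univ : Finset (Fin n × Fin n)))
        (t := (Finset.univ : Finset (Fin n × Fin n)))
        (f := fun p q => z q.1 * F p.1 p.2 q.1 * (z q.2 * F p.1 p.2 q.2))
      simp only [Fintype.sum_prod_type] at h
      rw [h]
      refine Finset.sum_congr rfl fun _ _ => Finset.sum_congr rfl fun _ _ =>
        Finset.sum_congr rfl fun _ _ => Finset.sum_congr rfl fun _ _ => ?_
      ring
    rw [sw (fun i j k => ν (bVec k) (bVec i) j), sw (fun i j k => ν (bVec i) (bVec j) k)]
    simp only [dotProduct, mulVec, momentMap, Matrix.of_apply]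
    rw [Finset.mul_sum, ← Finset.sum_add_distrib]
    refine Finset.sum_congr rfl fun k _ => ?_
    rw [Finset.mul_sum, Finset.mul_sum, ← Finset.sum_add_distrib]
    refine Finset.sum_congr rfl fun l _ => ?_
    ring
  rw [e]
  simp only [hz]
  have : 0 ≤ ∑ i, ∑ j, (∑ k, z k * ν (bVec i) (bVec j) k) ^ 2 :=
    Finset.sum_nonneg fun _ _ => Finset.sum_nonneg fun _ _ => sq_nonneg _
  simpa using this

/-- a nonzero characteristically nilpotent Lie algebra law (all of
whose derivations are nilpotent) is not an Einstein nilradical. -/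
theorem stmt_19 (n : ℕ) (μ : Law n) (hμ : IsNilpotentLaw μ) (hne : μ ≠ 0)
    (hchar : ∀ ψ : Matrix (Fin n) (Fin n) ℝ, IsDerivation μ ψ → IsNilpotent ψ) :
    ¬ IsEinsteinNilradical μ := by
  rintro ⟨g, c, φ, hc, hs, hd, hm⟩
  have gi : (g : Matrix (Fin n) (Fin n) ℝ) * ((g⁻¹ : GL (Fin n) ℝ) : Matrix (Fin n) (Fin n) ℝ) = 1 :=
    Units.mul_inv g
  have ig : ((g⁻¹ : GL (Fin n) ℝ) : Matrix (Fin n) (Fin n) ℝ) * (g : Matrix (Fin n) (Fin n) ℝ) = 1 :=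
    Units.inv_mul g
  have hact : ∀ X Y, act g μ X Y = (g : Matrix (Fin n) (Fin n) ℝ).mulVec
      (μ (((g⁻¹ : GL (Fin n) ℝ) : Matrix (Fin n) (Fin n) ℝ).mulVec X)
         (((g⁻¹ : GL (Fin n) ℝ) : Matrix (Fin n) (Fin n) ℝ).mulVec Y)) := fun _ _ => rfl
  generalize hG : (g : Matrix (Fin n) (Fin n) ℝ) = G at gi ig hact
  generalize hH : ((g⁻¹ : GL (Fin n) ℝ) : Matrix (Fin n) (Fin n) ℝ) = H at gi ig hact
  have hder : IsDerivation μ (H * φ * G) := by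
    intro X Y
    have h := congrArg (fun v => H *ᵥ v) (hd (G *ᵥ X) (G *ᵥ Y))
    simp only [hact, Matrix.mulVec_add, Matrix.mulVec_mulVec, ig, Matrix.one_mulVec,
      ← Matrix.mul_assoc] at h
    exact h
  have hφ : φ = 0 := by
    apply symm_nilp_zero φ hs
    obtain ⟨m, hm'⟩ := hchar _ hder
    have hp : ∀ k : ℕ, (H * φ * G) ^ k = H * φ ^ k * G := by
      intro k
      induction k with
      | zero => simp [ig]
      | succ k ih =>
        rw [pow_succ, ih, pow_succ]
        calc H * φ ^ k * G * (H * φ * G) = H * φ ^ k * (G * H) * φ * G := by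
              simp only [Matrix.mul_assoc]
          _ = _ := by rw [gi]; simp only [Matrix.mul_assoc, Matrix.mul_one]
    refine ⟨m, ?_⟩
    rw [hp] at hm'
    calc φ ^ m = (G * H) * φ ^ m * (G * H) := by rw [gi]; simp
      _ = G * (H * φ ^ m * G) * H := by simp only [Matrix.mul_assoc]
      _ = 0 := by rw [hm']; simp
  subst hφ
  obtain ⟨z, hz0, hz⟩ := exists_center μ hμ hne
  have hw0 : G *ᵥ z ≠ 0 := by
    intro h
    apply hz0
    have := congrArg (fun v => H *ᵥ v) h
    simpa [Matrix.mulVec_mulVec, ig] using this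
  have hnn := moment_nonneg (act g μ) (G *ᵥ z) (by
    intro i j
    have hlin : IsLinearMap ℝ (fun X => act g μ X (bVec i)) := by
      have hl := hμ.1.1.2 (H *ᵥ bVec i)
      constructor
      · intro x y
        simp only [hact, Matrix.mulVec_add]
        rw [hl.map_add, Matrix.mulVec_add]
      · intro a x
        simp only [hact, Matrix.mulVec_smul]
        rw [hl.map_smul, Matrix.mulVec_smul]
    have h0 : act g μ (G *ᵥ z) (bVec i) = 0 := by
      rw [hact, Matrix.mulVec_mulVec, ig, Matrix.one_mulVec, hz, Matrix.mulVec_zero]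
    generalize G *ᵥ z = w at h0
    have hw : w = ∑ k, w k • (bVec k : Fin n → ℝ) := by
      simpa [bVec] using (pi_eq_sum_univ' w)
    have hL : hlin.mk' _ w = ∑ k, w k • hlin.mk' _ (bVec k) := by
      conv_lhs => rw [hw]
      simp only [map_sum, map_smul]
    simp only [IsLinearMap.mk'_apply] at hL
    rw [h0] at hL
    have := congrFun hL j
    simpa using this.symm)
  rw [hm, add_zero, Matrix.smul_mulVec, Matrix.one_mulVec, dotProduct_smul, smul_eq_mul] at hnn
  have hpos : 0 < (G *ᵥ z) ⬝ᵥ (G *ᵥ z) := by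
    refine lt_of_le_of_ne (Finset.sum_nonneg fun _ _ => mul_self_nonneg _) ?_
    intro h
    exact hw0 (dotProduct_self_eq_zero.mp h.symm)
  nlinarith
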